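/- For all natural numbers n ≥ 1 and r, and all real x > 0: P^n[t ↦ t^n · q̌_r({t})](x) = ((−1)^n / C(r+n, n)) · ((P − 1)(P − 1/2)⋯(P − 1/n))[t ↦ q̌_{r+n}({t})](x), where (P − c) denotes the operator f ↦ P[f] − c·f and the factors are composed. -/

import Mathlib

/-!
Put `h_{n,r}(t) = t^n q̌_r({t})`. Since `B_{m+1}' = (m+1) B_m`, the function `q̌_{r+1}({t})` is
continuous and has derivative `(r+1) q̌_r({t})` off the integers, so integrating the derivative of
`t^{n+1} q̌_{r+1}({t})` over `[0, x]` gives, for `x > 0`,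
`P[h_{n+1,r}] = -((n+1)/(r+1)) (P - 1/(n+1)) h_{n,r+1}` (`cesaro_pow_succ`).

Apply `P^n` to this. The operators `P` and `P - c` commute with one another on measurable, locally
bounded functions (`LocBdd`), a class which `P` preserves. The factor `P - 1/(n+1)` therefore comes
out in front of `P^n h_{n,r+1}`, which is known by induction on `n` (with `r` free), and can then be
moved past the other factors into the innermost position, where `opFactors` has it. The constants
agree because `C(r+n+1, n+1) (n+1) = C(r+n+1, n) (r+1)`.
-/

open Filter

/-- The Cesàro averaging operator `P[f](x) = (1/x) ∫₀^x f(t) dt`. -/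
noncomputable def cesaro (f : ℝ → ℂ) : ℝ → ℂ :=
  fun x => (x : ℂ)⁻¹ * ∫ t in (0:ℝ)..x, f t

/-- The composed operator `(P − c₁)(P − c₂)⋯(P − cₘ)` applied to `f`, where
`cs = [c₁, …, cₘ]` and `(P − c)` denotes `f ↦ P[f] − c·f`. -/
noncomputable def opFactors (cs : List ℂ) (f : ℝ → ℂ) : ℝ → ℂ :=
  cs.foldr (fun c g => fun x => cesaro g x - c * g x) f

/-- `q̌_j(α) = B_{j+1}(α)/(j+1)`, as a complex-valued function of a real variable. -/
noncomputable def qCheck (j : ℕ) (a : ℝ) : ℂ :=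
  Polynomial.aeval ((a : ℝ) : ℂ) (Polynomial.bernoulli (j + 1)) / ((j : ℂ) + 1)

/-! ### Measurable locally bounded functions -/

/-- Measurable functions that are bounded on every bounded set: a class of functions on which
`cesaro` acts linearly and which it preserves. -/
def LocBdd (f : ℝ → ℂ) : Prop :=
  Measurable f ∧ ∀ R : ℝ, ∃ C : ℝ, ∀ t : ℝ, |t| ≤ R → ‖f t‖ ≤ C

/-- The single factor `P - c`. -/
noncomputable def shiftOp (c : ℂ) (g : ℝ → ℂ) : ℝ → ℂ := fun x => cesaro g x - c * g x

namespace LocBdd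

variable {f g : ℝ → ℂ}

lemma intervalIntegrable (hf : LocBdd f) (a b : ℝ) :
    IntervalIntegrable f MeasureTheory.volume a b := by
  obtain ⟨C, hC⟩ := hf.2 (max |a| |b|)
  refine (intervalIntegrable_const (c := C)).mono_fun' hf.1.aestronglyMeasurable ?_
  refine (MeasureTheory.ae_restrict_iff' measurableSet_uIoc).2 (.of_forall fun t ht => hC t ?_)
  have h := Set.uIoc_subset_uIcc ht
  rw [Set.mem_uIcc] at h
  rcases h with h | h
  · exact abs_le_max_abs_abs h.1 h.2
  · rw [max_comm]
    exact abs_le_max_abs_abs h.1 h.2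

lemma const_mul (hf : LocBdd f) (c : ℂ) : LocBdd (fun x => c * f x) := by
  refine ⟨hf.1.const_mul c, fun R => ?_⟩
  obtain ⟨C, hC⟩ := hf.2 R
  refine ⟨‖c‖ * C, fun t ht => ?_⟩
  rw [norm_mul]
  exact mul_le_mul_of_nonneg_left (hC t ht) (norm_nonneg _)

lemma sub (hf : LocBdd f) (hg : LocBdd g) : LocBdd (fun x => f x - g x) := by
  refine ⟨hf.1.sub hg.1, fun R => ?_⟩
  obtain ⟨C, hC⟩ := hf.2 R
  obtain ⟨D, hD⟩ := hg.2 R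
  exact ⟨C + D, fun t ht => (norm_sub_le _ _).trans (add_le_add (hC t ht) (hD t ht))⟩

lemma cesaro (hf : LocBdd f) : LocBdd (cesaro f) := by
  constructor
  · exact (Complex.measurable_ofReal.inv).mul
      (intervalIntegral.continuous_primitive hf.intervalIntegrable 0).measurable
  · intro R
    obtain ⟨C, hC⟩ := hf.2 R
    refine ⟨C, fun x hx => ?_⟩
    have hC0 : 0 ≤ C := (norm_nonneg _).trans (hC x hx)
    have h : ‖∫ t in (0:ℝ)..x, f t‖ ≤ C * |x - 0| := by
      refine intervalIntegral.norm_integral_le_of_norm_le_const fun t ht => hC t ?_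
      have h := Set.abs_sub_left_of_mem_uIcc (Set.uIoc_subset_uIcc ht)
      simp only [sub_zero] at h
      exact h.trans hx
    rw [sub_zero] at h
    unfold _root_.cesaro
    rw [norm_mul, norm_inv, Complex.norm_real, Real.norm_eq_abs]
    rcases eq_or_ne x 0 with rfl | hx0
    · simpa using hC0
    · rw [inv_mul_le_iff₀ (abs_pos.2 hx0), mul_comm]
      exact h

lemma shiftOp (hf : LocBdd f) (c : ℂ) : LocBdd (shiftOp c f) := hf.cesaro.sub (hf.const_mul c)

lemma opFactors (hf : LocBdd f) (cs : List ℂ) : LocBdd (opFactors cs f) := by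
  induction cs with
  | nil => exact hf
  | cons c cs ih => exact ih.shiftOp c

lemma cesaro_iterate (hf : LocBdd f) (n : ℕ) : LocBdd (_root_.cesaro^[n] f) := by
  induction n with
  | zero => exact hf
  | succ n ih =>
    rw [Function.iterate_succ_apply']
    exact ih.cesaro

end LocBdd

/-! ### Linearity and commutation of the operators -/

lemma cesaro_const_mul (c : ℂ) (f : ℝ → ℂ) :
    cesaro (fun x => c * f x) = fun x => c * cesaro f x := by
  funext x
  simp only [cesaro, intervalIntegral.integral_const_mul]
  ring

lemma cesaro_iterate_const_mul (c : ℂ) (f : ℝ → ℂ) (n : ℕ) :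
    cesaro^[n] (fun x => c * f x) = fun x => c * cesaro^[n] f x := by
  induction n with
  | zero => rfl
  | succ n ih => rw [Function.iterate_succ_apply', ih, cesaro_const_mul,
      Function.iterate_succ_apply']

lemma cesaro_sub {f g : ℝ → ℂ} (hf : LocBdd f) (hg : LocBdd g) :
    cesaro (fun x => f x - g x) = fun x => cesaro f x - cesaro g x := by
  funext x
  simp only [cesaro]
  rw [intervalIntegral.integral_sub (hf.intervalIntegrable _ _) (hg.intervalIntegrable _ _)]
  ring

lemma cesaro_shiftOp {f : ℝ → ℂ} (hf : LocBdd f) (c : ℂ) :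
    cesaro (shiftOp c f) = shiftOp c (cesaro f) := by
  unfold shiftOp
  rw [cesaro_sub hf.cesaro (hf.const_mul c), cesaro_const_mul]

lemma cesaro_iterate_shiftOp {f : ℝ → ℂ} (hf : LocBdd f) (c : ℂ) (n : ℕ) :
    cesaro^[n] (shiftOp c f) = shiftOp c (cesaro^[n] f) := by
  induction n with
  | zero => rfl
  | succ n ih => rw [Function.iterate_succ_apply', ih, cesaro_shiftOp (hf.cesaro_iterate n),
      Function.iterate_succ_apply']

lemma shiftOp_comm {f : ℝ → ℂ} (hf : LocBdd f) (c d : ℂ) :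
    shiftOp c (shiftOp d f) = shiftOp d (shiftOp c f) := by
  funext x
  have h1 : ∀ a b : ℂ, shiftOp a (shiftOp b f) x
      = cesaro (cesaro f) x - b * cesaro f x - a * (cesaro f x - b * f x) := by
    intro a b
    have h := congrFun (cesaro_shiftOp hf b) x
    calc shiftOp a (shiftOp b f) x = cesaro (shiftOp b f) x - a * shiftOp b f x := rfl
      _ = _ := by rw [h]; rfl
  rw [h1, h1]
  ring

lemma opFactors_shiftOp {f : ℝ → ℂ} (hf : LocBdd f) (cs : List ℂ) (c : ℂ) :
    opFactors cs (shiftOp c f) = shiftOp c (opFactors cs f) := by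
  induction cs with
  | nil => rfl
  | cons d cs ih =>
    change shiftOp d (opFactors cs (shiftOp c f)) = shiftOp c (shiftOp d (opFactors cs f))
    rw [ih, shiftOp_comm (hf.opFactors cs)]

lemma opFactors_append_singleton {f : ℝ → ℂ} (hf : LocBdd f) (cs : List ℂ) (c : ℂ) :
    opFactors (cs ++ [c]) f = shiftOp c (opFactors cs f) := by
  rw [← opFactors_shiftOp hf]
  simp only [opFactors, List.foldr_append]
  rfl

/-! ### Dependence on the values on `(0, ∞)` only -/

lemma cesaro_congr {f g : ℝ → ℂ} (h : Set.EqOn f g (Set.Ioi 0)) :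
    Set.EqOn (cesaro f) (cesaro g) (Set.Ioi 0) := by
  intro x hx
  simp only [cesaro]
  congr 1
  refine intervalIntegral.integral_congr_ae (.of_forall fun t ht => h ?_)
  rw [Set.uIoc_of_le (le_of_lt hx)] at ht
  exact ht.1

lemma cesaro_iterate_congr {f g : ℝ → ℂ} (h : Set.EqOn f g (Set.Ioi 0)) (n : ℕ) :
    Set.EqOn (cesaro^[n] f) (cesaro^[n] g) (Set.Ioi 0) := by
  induction n with
  | zero => exact h
  | succ n ih =>
    rw [Function.iterate_succ_apply', Function.iterate_succ_apply']
    exact cesaro_congr ih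

/-! ### The periodized Bernoulli functions -/

lemma continuous_qCheck (j : ℕ) : Continuous (qCheck j) := by
  unfold qCheck
  fun_prop

lemma hasDerivAt_qCheck (j : ℕ) (a : ℝ) :
    HasDerivAt (qCheck (j + 1)) (((j : ℂ) + 1) * qCheck j a) a := by
  have h := ((Polynomial.bernoulli (j + 1 + 1)).hasDerivAt_aeval (a : ℂ)).comp_ofReal.div_const
    (((j + 1 : ℕ) : ℂ) + 1)
  refine h.congr_deriv ?_
  have h1 : ((j : ℂ) + 1) ≠ 0 := by exact_mod_cast j.succ_ne_zero
  have h2 : ((j : ℂ) + 1 + 1) ≠ 0 := by exact_mod_cast (j + 1).succ_ne_zero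
  rw [Polynomial.derivative_bernoulli_add_one]
  simp only [qCheck, map_mul, map_add, map_natCast, map_one]
  push_cast
  field_simp

/-- Continuity at the integers is `B_m(0) = B_m(1)`, which fails for `m = 1`; hence the index
`j + 1`. -/
lemma continuous_qCheck_fract (j : ℕ) : Continuous fun t : ℝ => qCheck (j + 1) (Int.fract t) := by
  refine (continuous_qCheck (j + 1)).continuousOn.comp_fract'' ?_
  have h : (Polynomial.bernoulli (j + 1 + 1)).eval 0 = (Polynomial.bernoulli (j + 1 + 1)).eval 1 := by
    rw [Polynomial.bernoulli_eval_zero, Polynomial.bernoulli_eval_one,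
      bernoulli_eq_bernoulli'_of_ne_one (by omega)]
  have h0 := Polynomial.aeval_algebraMap_apply_eq_algebraMap_eval (A := ℂ) (0 : ℚ)
    (Polynomial.bernoulli (j + 1 + 1))
  have h1 := Polynomial.aeval_algebraMap_apply_eq_algebraMap_eval (A := ℂ) (1 : ℚ)
    (Polynomial.bernoulli (j + 1 + 1))
  rw [map_zero] at h0
  rw [map_one] at h1
  simp only [qCheck, Complex.ofReal_zero, Complex.ofReal_one]
  rw [h0, h1, h]

lemma hasDerivAt_qCheck_fract (j : ℕ) {t : ℝ} (ht : t ∉ Set.range ((↑) : ℤ → ℝ)) :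
    HasDerivAt (fun t : ℝ => qCheck (j + 1) (Int.fract t))
      (((j : ℂ) + 1) * qCheck j (Int.fract t)) t := by
  have h := (hasDerivAt_qCheck j (t - ⌊t⌋)).comp_sub_const t (⌊t⌋ : ℝ)
  refine h.congr_of_eventuallyEq ?_
  have hlt : (⌊t⌋ : ℝ) < t := lt_of_le_of_ne (Int.floor_le t) fun h => ht ⟨_, h⟩
  filter_upwards [Ioo_mem_nhds hlt (Int.lt_floor_add_one t)] with s hs
  rw [← Int.self_sub_floor, Int.floor_eq_iff.2 ⟨hs.1.le, hs.2⟩]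

lemma locBdd_pow_mul_qCheck (n r : ℕ) :
    LocBdd fun t : ℝ => (t : ℂ) ^ n * qCheck r (Int.fract t) := by
  refine ⟨(Complex.measurable_ofReal.pow_const n).mul
    ((continuous_qCheck r).measurable.comp measurable_fract), fun R => ?_⟩
  obtain ⟨C, hC⟩ := (isCompact_Icc (a := (0:ℝ)) (b := 1)).exists_bound_of_continuousOn
    (continuous_qCheck r).continuousOn
  refine ⟨R ^ n * C, fun t ht => ?_⟩
  rw [norm_mul, norm_pow, Complex.norm_real, Real.norm_eq_abs]
  have hq := hC _ ⟨Int.fract_nonneg t, (Int.fract_lt_one t).le⟩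
  have hR : 0 ≤ R := (abs_nonneg t).trans ht
  gcongr

/-! ### The reduction step and the induction -/

/-- The reduction step: integration by parts of `t^{n+1} q̌_{r+1}({t})`. It fails in general at
`x = 0`, where `cesaro` has the junk value `0`. -/
lemma cesaro_pow_succ (n r : ℕ) :
    Set.EqOn (cesaro fun t : ℝ => (t : ℂ) ^ (n + 1) * qCheck r (Int.fract t))
      (fun x => (-((n : ℂ) + 1) / ((r : ℂ) + 1)) *
        shiftOp (1 / ((n : ℂ) + 1)) (fun t : ℝ => (t : ℂ) ^ n * qCheck (r + 1) (Int.fract t)) x)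
      (Set.Ioi 0) := by
  intro x hx
  have hn1 : ((n : ℂ) + 1) ≠ 0 := by exact_mod_cast n.succ_ne_zero
  have hr1 : ((r : ℂ) + 1) ≠ 0 := by exact_mod_cast r.succ_ne_zero
  have hx0 : (x : ℂ) ≠ 0 := by exact_mod_cast (ne_of_gt hx)
  have hI1 := ((locBdd_pow_mul_qCheck n (r + 1)).const_mul ((n : ℂ) + 1)).intervalIntegrable 0 x
  have hI2 := ((locBdd_pow_mul_qCheck (n + 1) r).const_mul ((r : ℂ) + 1)).intervalIntegrable 0 x
  have key := MeasureTheory.integral_eq_of_hasDerivAt_off_countable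
    (fun t : ℝ => (t : ℂ) ^ (n + 1) * qCheck (r + 1) (Int.fract t))
    (fun t : ℝ => ((n : ℂ) + 1) * ((t : ℂ) ^ n * qCheck (r + 1) (Int.fract t)) +
      ((r : ℂ) + 1) * ((t : ℂ) ^ (n + 1) * qCheck r (Int.fract t)))
    (a := 0) (b := x) (Set.countable_range ((↑) : ℤ → ℝ))
    (((Complex.continuous_ofReal.pow _).mul (continuous_qCheck_fract r)).continuousOn)
    (by
      rintro t ⟨-, ht⟩
      have h := (((hasDerivAt_id (t : ℂ)).pow (n + 1)).comp_ofReal).mul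
        (hasDerivAt_qCheck_fract r ht)
      refine h.congr_deriv ?_
      simp
      ring)
    (hI1.add hI2)
  rw [intervalIntegral.integral_add hI1 hI2, intervalIntegral.integral_const_mul,
    intervalIntegral.integral_const_mul] at key
  simp only [Complex.ofReal_zero, pow_succ, mul_zero, zero_mul, sub_zero] at key
  simp only [shiftOp, cesaro, pow_succ]
  field_simp
  linear_combination key

lemma cesaro_iterate_eq_opFactors (n : ℕ) : ∀ r : ℕ,
    Set.EqOn (cesaro^[n] (fun t : ℝ => (t : ℂ) ^ n * qCheck r (Int.fract t)))
      (fun x => ((-1 : ℂ) ^ n / ((r + n).choose n)) *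
        opFactors ((List.range n).map (fun i : ℕ => 1 / ((i : ℂ) + 1)))
          (fun t : ℝ => qCheck (r + n) (Int.fract t)) x) (Set.Ioi 0) := by
  induction n with
  | zero =>
    intro r x _
    simp [opFactors]
  | succ n ih =>
    intro r x hx
    have hq : LocBdd fun t : ℝ => qCheck (r + (n + 1)) (Int.fract t) := by
      simpa using locBdd_pow_mul_qCheck 0 (r + (n + 1))
    have hcongr : Set.EqOn
        (shiftOp (1 / ((n : ℂ) + 1))
          (cesaro^[n] fun t : ℝ => (t : ℂ) ^ n * qCheck (r + 1) (Int.fract t)))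
        (shiftOp (1 / ((n : ℂ) + 1)) fun x => ((-1 : ℂ) ^ n / ((r + 1 + n).choose n)) *
          opFactors ((List.range n).map (fun i : ℕ => 1 / ((i : ℂ) + 1)))
            (fun t : ℝ => qCheck (r + 1 + n) (Int.fract t)) x) (Set.Ioi 0) := by
      intro y hy
      simp only [shiftOp]
      rw [cesaro_congr (ih (r + 1)) hy, ih (r + 1) hy]
    rw [Function.iterate_succ_apply, cesaro_iterate_congr (cesaro_pow_succ n r) n hx,
      cesaro_iterate_const_mul, cesaro_iterate_shiftOp (locBdd_pow_mul_qCheck n (r + 1))]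
    simp only
    rw [hcongr hx, List.range_succ, List.map_append, List.map_singleton,
      opFactors_append_singleton hq]
    simp only [shiftOp, cesaro_const_mul]
    rw [show r + 1 + n = r + (n + 1) by omega]
    have hn1 : ((n : ℂ) + 1) ≠ 0 := by exact_mod_cast n.succ_ne_zero
    have hr1 : ((r : ℂ) + 1) ≠ 0 := by exact_mod_cast r.succ_ne_zero
    have hc1 : (((r + (n + 1)).choose n : ℕ) : ℂ) ≠ 0 := by
      exact_mod_cast (Nat.choose_pos (by omega)).ne'
    have hc2 : (((r + (n + 1)).choose (n + 1) : ℕ) : ℂ) ≠ 0 := by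
      exact_mod_cast (Nat.choose_pos (by omega)).ne'
    have hch : (((r + (n + 1)).choose (n + 1) : ℕ) : ℂ) * ((n : ℂ) + 1)
        = (((r + (n + 1)).choose n : ℕ) : ℂ) * ((r : ℂ) + 1) := by
      have h := Nat.choose_succ_right_eq (r + (n + 1)) n
      rw [show r + (n + 1) - n = r + 1 by omega] at h
      exact_mod_cast h
    have hcoef : (-((n : ℂ) + 1) / ((r : ℂ) + 1)) * ((-1 : ℂ) ^ n / ((r + (n + 1)).choose n))
        = (-1 : ℂ) ^ (n + 1) / ((r + (n + 1)).choose (n + 1)) := by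
      rw [div_mul_div_comm, div_eq_div_iff (mul_ne_zero hr1 hc1) hc2]
      linear_combination (-(-1 : ℂ) ^ n) * hch
    rw [← hcoef]
    ring

/-- For naturals `n ≥ 1`, `r`, and real `x > 0`:
`P^n[t ↦ t^n q̌_r({t})](x)
  = ((−1)^n / C(r+n,n)) · ((P−1)(P−1/2)⋯(P−1/n))[t ↦ q̌_{r+n}({t})](x)`. -/
theorem cesaro_iterate_pow_mul_qCheck_eq (n r : ℕ) (hn : 1 ≤ n) (x : ℝ) (hx : 0 < x) :
    cesaro^[n] (fun t : ℝ => (t : ℂ) ^ n * qCheck r (Int.fract t)) x =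
      ((-1 : ℂ) ^ n / ((r + n).choose n)) *
        opFactors ((List.range n).map (fun i => 1 / ((i : ℂ) + 1)))
          (fun t : ℝ => qCheck (r + n) (Int.fract t)) x := by
  -- In the statement `i` ranges over the list `List.range n` coerced to `List ℂ`.
  rw [show ((List.range n).map (fun i => 1 / ((i : ℂ) + 1)) : List ℂ)
      = (List.range n).map (fun i : ℕ => 1 / ((i : ℂ) + 1)) by
    simp [← List.map_eq_flatMap]]
  exact cesaro_iterate_eq_opFactors n r hx
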